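/- arXiv:1705.07542 — 2 statements merged into one kernel-verified Lean document; each statement's English description precedes it below -/
import Mathlib

section
/- In type $A_{2n-1}$ with the diagram automorphism $i^\vee = 2n-i$, every reduced expression of $w_0$ arising from a twisted adapted class has $\vee$-Coxeter composition $(2n-1, 2n-1, \ldots, 2n-1)$ ($n$ entries); in particular, for the twisted Coxeter element construction $\widetilde{w}_0 = \prod_{k=0}^{2n-2}(s_{j_1}\cdots s_{j_n})^{k\vee}$, each $\vee$-orbit of indices contributes exactly $2n-1$ letters and $\widetilde{w}_0$ has length $n(2n-1) = \ell(w_0)$. -/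
/-!
Let `c = s_{j_1} ⋯ s_{j_n}` and let `r` be the reversal of the `2n` points on which
`S_{2n}` acts. Conjugation by `r` realises `∨`, so the word `w̃₀` with `2n - 1` blocks maps to
`∏ r^k c r^{-k} = (c r)^{2n-1} r^{-(2n-1)}` in the symmetric group.

The key fact (`twisted_cycle`) is that `c r` is a cycle of length `2n - 1` (with one fixed point),
so that `w̃₀` maps to `r^{-(2n-1)} = r`. It is proved by induction on `n`: the letter of the outermost
orbit commutes past all other letters except those of the next orbit, of which only one occurs, so
it can be moved to the left or to the right end of `c`. Removing it gives a twisted Coxeter element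
of the previous rank, and putting it back inserts the two new points into the previous cycle
next to one of the two outermost old points, up to conjugation. The induction hypothesis therefore
has to include that both outermost points lie on the cycle when the rank is at least two; in
rank one the cycle has length one and may be taken at either point.

The reversal has `n(2n-1)` inversions and a simple reflection changes the number of inversions by
at most one, so `w̃₀` has length at least `n(2n-1)`, which is its number of letters: it is reduced.
Conversely every element of a group with the Coxeter relations of type `A_m` has a normal form
`d_1 d_2 ⋯ d_m` with `d_k` a descending product of at most `k` consecutive generators
(`IsNF.mul_gen`), hence length at most `m(m+1)/2`, which is `n(2n-1)` for `m = 2n-1`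
(`length_le`). This yields maximality without knowing that the permutation representation is
faithful. The orbit counts hold block by block, since `∨` preserves orbits, and commutation moves
only permute letters.

The symmetric group is realised inside `Perm ℤ`, acting on the window `1 - n, …, n`; the letter
`a : Fin (2n-1)` becomes the integer `a - (n - 1)`, acting as `swap j (j + 1)`. With this
centring `∨` is negation, `r` is `x ↦ 1 - x`, the orbit of a letter is its absolute value, and
the windows for different `n` are nested.
-/

/-- Commutation equivalence of words over a Coxeter matrix: one word is obtained from
the other by moves `s_k s_l = s_l s_k` with `m(k,l) = 2`. -/
inductive CommEquiv {I : Type*} (M : CoxeterMatrix I) : List I → List I → Prop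
  | refl (l : List I) : CommEquiv M l l
  | swap (a b : List I) (k l : I) (h : M.M k l = 2) :
      CommEquiv M (a ++ k :: l :: b) (a ++ l :: k :: b)
  | trans {l₁ l₂ l₃ : List I} :
      CommEquiv M l₁ l₂ → CommEquiv M l₂ l₃ → CommEquiv M l₁ l₃

namespace TwistedCoxeter

/-! ### Normal forms and the maximal length in type `A` -/

section NormalForm
variable {G : Type*} [Group G]

/-- The descending product `s (j + l - 1) * ⋯ * s (j + 1) * s j` of `l` consecutive generators. -/
def desc (s : ℕ → G) (j : ℕ) : ℕ → G
  | 0 => 1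
  | l + 1 => s (j + l) * desc s j l

/-- `x` has the form `d_1 * ⋯ * d_k`, where `d_i` is a (possibly empty) descending product of
consecutive generators starting at `s (i - 1)`. -/
def IsNF (s : ℕ → G) : ℕ → G → Prop
  | 0, x => x = 1
  | k + 1, x => ∃ y j l, IsNF s k y ∧ j + l = k + 1 ∧ x = y * desc s j l

theorem desc_succ_right (s : ℕ → G) (j l : ℕ) : desc s j (l + 1) = desc s (j + 1) l * s j := by
  induction l with
  | zero => simp [desc]
  | succ l ih =>
    rw [desc, ih, desc, ← mul_assoc]
    congr 3; omega

theorem desc_comm (s : ℕ → G) (m : ℕ)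
    (hc : ∀ i j, i < m → j < m → i + 2 ≤ j → s i * s j = s j * s i)
    (i j l : ℕ) (hi : i < m) (hjl : j + l ≤ m) (h : i + 2 ≤ j ∨ j + l + 1 ≤ i) :
    desc s j l * s i = s i * desc s j l := by
  induction l with
  | zero => simp [desc]
  | succ l ih =>
    have h1 : s (j + l) * s i = s i * s (j + l) := by
      rcases h with h | h
      · exact (hc i (j + l) hi (by omega) (by omega)).symm
      · exact hc (j + l) i (by omega) hi (by omega)
    rw [desc, mul_assoc, ih (by omega) (by omega), ← mul_assoc, h1, mul_assoc]

/-- The braid relation moves a generator from the right to the left of a descending product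
containing it, lowering its index by one. -/
theorem desc_shift (s : ℕ → G) (m : ℕ)
    (hc : ∀ i j, i < m → j < m → i + 2 ≤ j → s i * s j = s j * s i)
    (hb : ∀ i, i + 1 < m → s (i + 1) * s i * s (i + 1) = s i * s (i + 1) * s i)
    (i j l : ℕ) (hjl : j + l ≤ m) (h1 : j ≤ i) (h2 : i + 1 < j + l) :
    desc s j l * s (i + 1) = s i * desc s j l := by
  induction l with
  | zero => omega
  | succ l ih =>
    by_cases hi : i + 1 < j + l
    · rw [desc, mul_assoc, ih (by omega) hi, ← mul_assoc, ← mul_assoc,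
        hc i (j + l) (by omega) (by omega) (by omega)]
    · obtain ⟨l, rfl⟩ : ∃ l', l = l' + 1 := ⟨l - 1, by omega⟩
      obtain rfl : i = j + l := by omega
      have e : j + (l + 1) = j + l + 1 := rfl
      rw [desc, desc, e, mul_assoc, mul_assoc,
        desc_comm s m hc (j + l + 1) j l (by omega) (by omega) (by omega),
        ← mul_assoc, ← mul_assoc, hb _ (by omega)]
      simp only [mul_assoc]

/-- Normal forms are stable under right multiplication by generators: the last descending product
absorbs the generator, or loses its last factor, or lets it pass to the left. -/
theorem IsNF.mul_gen {s : ℕ → G} {m : ℕ}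
    (hs : ∀ i, i < m → s i * s i = 1)
    (hc : ∀ i j, i < m → j < m → i + 2 ≤ j → s i * s j = s j * s i)
    (hb : ∀ i, i + 1 < m → s (i + 1) * s i * s (i + 1) = s i * s (i + 1) * s i) :
    ∀ {k : ℕ}, k ≤ m → ∀ {x : G}, IsNF s k x → ∀ i, i < k → IsNF s k (x * s i) := by
  intro k
  induction k with
  | zero => intro _ _ _ i hi; omega
  | succ k ih =>
    rintro hk x ⟨y, j, l, hy, hjl, rfl⟩ i hi
    rcases lt_trichotomy i j with h | h | h
    · by_cases h' : i + 1 = j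
      · subst h'
        exact ⟨y, i, l + 1, hy, by omega, by rw [desc_succ_right, mul_assoc]⟩
      · refine ⟨y * s i, j, l, ih (by omega) hy i (by omega), hjl, ?_⟩
        rw [mul_assoc, desc_comm s m hc i j l (by omega) (by omega) (by omega), mul_assoc]
    · subst h
      obtain ⟨l, rfl⟩ : ∃ l', l = l' + 1 := ⟨l - 1, by omega⟩
      refine ⟨y, i + 1, l, hy, by omega, ?_⟩
      rw [desc_succ_right, mul_assoc, mul_assoc, hs i (by omega), mul_one]
    · obtain ⟨i, rfl⟩ : ∃ i', i = i' + 1 := ⟨i - 1, by omega⟩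
      refine ⟨y * s i, j, l, ih (by omega) hy i (by omega), hjl, ?_⟩
      rw [mul_assoc, desc_shift s m hc hb i j l (by omega) (by omega) (by omega), mul_assoc]

end NormalForm

theorem isNF_one {G : Type*} [Group G] (s : ℕ → G) (k : ℕ) : IsNF s k 1 := by
  induction k with
  | zero => rfl
  | succ k ih => exact ⟨1, k + 1, 0, ih, rfl, by simp [desc]⟩

theorem A_apply (m : ℕ) (i j : Fin m) : (CoxeterMatrix.A m).M i j =
    if i = j then 1 else if (j : ℕ) + 1 = i ∨ (i : ℕ) + 1 = j then 3 else 2 := rfl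

theorem length_le {W : Type*} [Group W] (m : ℕ)
    (cs : CoxeterSystem (CoxeterMatrix.A m) W) (w : W) : 2 * cs.length w ≤ m * (m + 1) := by
  let s : ℕ → W := fun i => if h : i < m then cs.simple ⟨i, h⟩ else 1
  have hs : ∀ i, i < m → s i * s i = 1 := by
    intro i hi; simp [s, hi]
  have hc : ∀ i j, i < m → j < m → i + 2 ≤ j → s i * s j = s j * s i := by
    intro i j hi hj hij
    have := cs.simple_mul_simple_pow ⟨i, hi⟩ ⟨j, hj⟩
    have hM : (CoxeterMatrix.A m).M ⟨i, hi⟩ ⟨j, hj⟩ = 2 := by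
      rw [A_apply, if_neg (by rw [Fin.mk.injEq]; omega), if_neg (by dsimp only; omega)]
    rw [hM, pow_two] at this
    simp only [s, hi, hj, dif_pos]
    have := mul_eq_one_iff_eq_inv.1 this
    simpa using this
  have hb : ∀ i, i + 1 < m → s (i + 1) * s i * s (i + 1) = s i * s (i + 1) * s i := by
    intro i hi
    have hi' : i < m := by omega
    have := cs.simple_mul_simple_pow ⟨i + 1, hi⟩ ⟨i, hi'⟩
    have hM : (CoxeterMatrix.A m).M ⟨i + 1, hi⟩ ⟨i, hi'⟩ = 3 := by
      rw [A_apply, if_neg (by rw [Fin.mk.injEq]; omega), if_pos (Or.inl rfl)]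
    rw [hM, pow_succ, pow_two] at this
    simp only [s, hi, hi', dif_pos]
    have h2 : (cs.simple ⟨i + 1, hi⟩ * cs.simple ⟨i, hi'⟩ * cs.simple ⟨i + 1, hi⟩) *
      (cs.simple ⟨i, hi'⟩ * cs.simple ⟨i + 1, hi⟩ * cs.simple ⟨i, hi'⟩) = 1 := by
      simpa only [mul_assoc] using this
    have := mul_eq_one_iff_eq_inv.1 h2
    simpa [mul_assoc] using this
  have hlen1 : ∀ i, cs.length (s i) ≤ 1 := by
    intro i; by_cases h : i < m <;> simp [s, h]
  have hdesc : ∀ j l, cs.length (desc s j l) ≤ l := by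
    intro j l
    induction l with
    | zero => simp [desc]
    | succ l ih =>
      have := cs.length_mul_le (s (j + l)) (desc s j l)
      have := hlen1 (j + l)
      simp only [desc]; omega
  have hNF : ∀ k x, IsNF s k x → 2 * cs.length x ≤ k * (k + 1) := by
    intro k
    induction k with
    | zero => rintro x rfl; simp
    | succ k ih =>
      rintro x ⟨y, j, l, hy, hjl, rfl⟩
      have h1 := cs.length_mul_le y (desc s j l)
      have h2 := hdesc j l
      have h3 := ih y hy
      nlinarith
  refine hNF m w ?_
  induction w using cs.simple_induction_right with
  | one => exact isNF_one s m
  | mul_simple_right w i ih =>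
    have := IsNF.mul_gen hs hc hb le_rfl ih i.1 i.2
    simpa [s] using this
/-! ### Adjacent transpositions and reversals of integer windows -/

open Equiv

/-- The adjacent transposition of the integers `j` and `j + 1`. -/
def tr (j : ℤ) : Perm ℤ := swap j (j + 1)

theorem tr_mul_self (j : ℤ) : tr j * tr j = 1 := swap_mul_self _ _

/-- The reversal `x ↦ 1 - x` of the window `1 - k, …, k`, fixing all other integers. -/
def windowRefl (k : ℕ) : Perm ℤ where
  toFun x := if 1 - (k : ℤ) ≤ x ∧ x ≤ k then 1 - x else x
  invFun x := if 1 - (k : ℤ) ≤ x ∧ x ≤ k then 1 - x else x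
  left_inv x := by dsimp only; split_ifs <;> omega
  right_inv x := by dsimp only; split_ifs <;> omega

theorem windowRefl_apply (k : ℕ) (x : ℤ) :
    windowRefl k x = if 1 - (k : ℤ) ≤ x ∧ x ≤ k then 1 - x else x := rfl

theorem windowRefl_mul_self (k : ℕ) : windowRefl k * windowRefl k = 1 := by
  ext x; simp only [Perm.mul_apply, windowRefl_apply, Perm.one_apply]; split_ifs <;> omega

theorem windowRefl_succ (k : ℕ) (b : ℤ) (hb : b = k + 1 ∨ b = -k) :
    windowRefl (k + 1) = windowRefl k * swap b (1 - b) := by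
  ext x
  simp only [Perm.mul_apply, windowRefl_apply, swap_apply_def]
  push_cast
  split_ifs <;> omega

theorem windowRefl_conj_tr (k : ℕ) (j : ℤ) (h1 : -(k : ℤ) < j) (h2 : j < k) :
    tr (-j) = windowRefl k * tr j * (windowRefl k)⁻¹ := by
  rw [tr, tr, ← swap_apply_apply, swap_comm, windowRefl_apply, windowRefl_apply, if_pos (by omega),
    if_pos (by omega)]
  congr 1 <;> ring

/-! ### The twisted Coxeter element is a cycle -/

theorem mul_swap_of_fixed {α : Type*} [DecidableEq α] (f : Perm α) (x y : α) (hx : f x = x)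
    (hy : f y = y) : f * swap x y = swap x y * f := by
  rw [mul_swap_eq_swap_mul, hx, hy]

theorem conj_formPerm {α : Type*} [DecidableEq α] (g : Perm α) (l : List α) :
    g * l.formPerm * g⁻¹ = (l.map g).formPerm := by
  match l with
  | [] => simp
  | [x] => simp
  | x :: y :: l =>
    have := conj_formPerm g (y :: l)
    simp only [List.map_cons, List.formPerm_cons_cons] at this ⊢
    rw [← this, swap_apply_apply]
    group

theorem exists_rotate {α : Type*} [DecidableEq α] {l : List α} (hl : l.Nodup) {a : α}
    (ha : a ∈ l) : ∃ l', (a :: l').Perm l ∧ (a :: l').formPerm = l.formPerm := by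
  obtain ⟨s, t, rfl⟩ := List.append_of_mem ha
  have h : (s ++ a :: t) ~r (a :: (t ++ s)) := List.isRotated_append
  exact ⟨t ++ s, h.perm.symm, (List.formPerm_eq_of_isRotated hl h).symm⟩

theorem formPerm_extend {α : Type*} [DecidableEq α] (a b b' : α) (l : List α)
    (hb : b ∉ a :: l) (hb' : b' ∉ a :: l) :
    swap a b * swap b b' * (a :: l).formPerm = (b :: b' :: a :: l).formPerm := by
  rw [List.formPerm_cons_cons, List.formPerm_cons_cons, ← mul_assoc]
  congr 1
  have : a ≠ b ∧ a ≠ b' := ⟨fun h => hb (by simp [h]), fun h => hb' (by simp [h])⟩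
  rw [mul_swap_eq_swap_mul (swap b b') b' a, swap_apply_right, swap_apply_of_ne_of_ne this.1 this.2,
    swap_comm b a]

theorem prod_tr_commute (L : List ℤ) (o : ℤ) (h : ∀ x ∈ L, x + 2 ≤ o ∨ o + 2 ≤ x) :
    Commute (L.map tr).prod (tr o) := by
  refine Commute.list_prod_left _ _ fun g hg => ?_
  obtain ⟨x, hx, rfl⟩ := List.mem_map.1 hg
  have := h x hx
  exact mul_swap_of_fixed _ _ _ (swap_apply_of_ne_of_ne (by omega) (by omega))
    (swap_apply_of_ne_of_ne (by omega) (by omega))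

/-- The neighbouring orbit contributes only one letter, so the outermost letter `o` commutes either
with everything before it or with everything after it. -/
theorem pull_outer (k : ℕ) (L₁ L₂ : List ℤ) (o : ℤ) (ho : o.natAbs = k)
    (h : ((L₁ ++ L₂).map Int.natAbs).Perm (List.range k)) :
    ((L₁ ++ o :: L₂).map tr).prod = tr o * ((L₁ ++ L₂).map tr).prod ∨
    ((L₁ ++ o :: L₂).map tr).prod = ((L₁ ++ L₂).map tr).prod * tr o := by
  have hnd : ((L₁ ++ L₂).map Int.natAbs).Nodup := h.nodup_iff.2 List.nodup_range
  have hlt : ∀ x ∈ L₁ ++ L₂, x.natAbs < k := fun x hx =>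
    List.mem_range.1 (h.mem_iff.1 (List.mem_map_of_mem hx))
  have key : (∀ x ∈ L₁, x.natAbs ≠ k - 1) ∨ (∀ x ∈ L₂, x.natAbs ≠ k - 1) := by
    by_contra! hcon
    obtain ⟨⟨x, hx, hx'⟩, y, hy, hy'⟩ := hcon
    rw [List.map_append, List.nodup_append] at hnd
    exact hnd.2.2 _ (List.mem_map_of_mem hx) _ (List.mem_map_of_mem hy) (by rw [hx', hy'])
  simp only [List.map_append, List.map_cons, List.prod_append, List.prod_cons]
  rcases key with hk | hk
  · left
    have := prod_tr_commute L₁ o fun x hx => by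
      have := hk x hx; have := hlt x (by simp [hx]); omega
    rw [← mul_assoc, this.eq, mul_assoc]
  · right
    have := prod_tr_commute L₂ o fun x hx => by
      have := hk x hx; have := hlt x (by simp [hx]); omega
    rw [← this.eq, mul_assoc]

/-- If `L` has one letter of each absolute value `0, …, k - 1`, with product `c`, then `c` times the
reversal of the window is a cycle of length `2 * k - 1` in the window. It passes through both end
points `k` and `1 - k`, except for `k = 1`, where it is trivial and may be based at either; this is
what choosing the base point `a` freely encodes. -/
theorem twisted_cycle (k : ℕ) (hk : 1 ≤ k) : ∀ L : List ℤ,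
    (L.map Int.natAbs).Perm (List.range k) → ∀ a : ℤ, (a = k ∨ a = 1 - k) →
    ∃ l : List ℤ, (a :: l).Nodup ∧ (a :: l).length = 2 * k - 1 ∧
      (∀ x ∈ a :: l, 1 - (k : ℤ) ≤ x ∧ x ≤ k) ∧
      (L.map tr).prod * windowRefl k = (a :: l).formPerm := by
  induction k, hk using Nat.le_induction with
  | base =>
    intro L hL a ha
    refine ⟨[], by simp, by simp, by simp; omega, ?_⟩
    obtain ⟨o, rfl⟩ : ∃ o, L = [o] := List.length_eq_one_iff.1 (by simpa using hL.length_eq)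
    have ho : o = 0 := by simpa using hL
    subst ho
    rw [List.formPerm_singleton]
    ext x
    simp only [List.map_cons, List.map_nil, List.prod_singleton, Perm.mul_apply, tr, windowRefl_apply,
      swap_apply_def, Perm.one_apply]
    push_cast
    split_ifs <;> omega
  | succ k hk ih =>
    intro L hL
    obtain ⟨o, hoL, ho⟩ := List.mem_map.1 (hL.mem_iff.2 (List.mem_range.2 (Nat.lt_succ_self k)))
    obtain ⟨L₁, L₂, rfl⟩ := List.append_of_mem hoL
    have hL' : ((L₁ ++ L₂).map Int.natAbs).Perm (List.range k) := by
      have h1 : ((L₁ ++ o :: L₂).map Int.natAbs).Perm (k :: (L₁ ++ L₂).map Int.natAbs) := by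
        rw [← ho, ← List.map_cons]; exact List.perm_middle.map _
      have h2 : (List.range (k + 1)).Perm (k :: List.range k) := by
        rw [List.range_succ]; exact List.perm_append_singleton _ _
      exact (List.perm_cons k).1 (h1.symm.trans (hL.trans h2))
    -- it suffices to find one suitable list containing both new points
    suffices H : ∃ b : ℤ, (b = k + 1 ∨ b = -k) ∧ ∃ l : List ℤ, (b :: (1 - b) :: l).Nodup ∧
        l.length = 2 * k - 1 ∧ (∀ x ∈ l, 1 - (k : ℤ) ≤ x ∧ x ≤ k) ∧
        ((L₁ ++ o :: L₂).map tr).prod * windowRefl (k + 1) = (b :: (1 - b) :: l).formPerm by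
      obtain ⟨b, hb, l, hnd, hlen, hmem, heq⟩ := H
      intro a ha
      push_cast at ha
      have hal : a ∈ b :: (1 - b) :: l := by
        have : a = b ∨ a = 1 - b := by omega
        rcases this with rfl | rfl <;> simp
      obtain ⟨l', hp, hl'⟩ := exists_rotate hnd hal
      refine ⟨l', hp.nodup_iff.2 hnd, ?_, fun x hx => ?_, by rw [heq, hl']⟩
      · rw [hp.length_eq]; simp; omega
      · have := hp.mem_iff.1 hx
        simp only [List.mem_cons] at this
        push_cast
        rcases this with rfl | rfl | h
        · omega
        · omega
        · have := hmem x h; omega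
    obtain ⟨a, b, hab, hb, htr⟩ : ∃ a b : ℤ, ((a = k ∧ b = k + 1) ∨ (a = 1 - k ∧ b = -k)) ∧
        (b = k + 1 ∨ b = -k) ∧ tr o = swap a b := by
      rcases Int.natAbs_eq o with h | h <;> rw [ho] at h
      · exact ⟨k, k + 1, by simp, by simp, by rw [h, tr]⟩
      · exact ⟨1 - k, -k, by simp, by simp, by rw [h, tr, swap_comm]; congr 1; ring⟩
    refine ⟨b, hb, ?_⟩
    -- `tr o` exchanges the old end point `a` with the new end point `b`
    rcases pull_outer k L₁ L₂ o ho hL' with hc | hc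
    · obtain ⟨l, hnd, hlen, hmem, heq⟩ := ih _ hL' a (by omega)
      have hbn : b ∉ a :: l := fun h => by have := hmem _ h; omega
      have hbn' : 1 - b ∉ a :: l := fun h => by have := hmem _ h; omega
      refine ⟨a :: l, ?_, hlen, hmem, ?_⟩
      · refine List.nodup_cons.2 ⟨?_, List.nodup_cons.2 ⟨hbn', hnd⟩⟩
        rw [List.mem_cons]; rintro (h | h)
        · omega
        · exact hbn h
      · rw [hc, htr, windowRefl_succ k b hb, ← formPerm_extend a b (1 - b) l hbn hbn', mul_assoc,
          ← mul_assoc _ (windowRefl k), heq, mul_swap_of_fixed _ _ _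
            (List.formPerm_apply_of_notMem hbn) (List.formPerm_apply_of_notMem hbn'), mul_assoc]
    · obtain ⟨l, hnd, hlen, hmem, heq⟩ := ih _ hL' (1 - a) (by omega)
      have hbn : b ∉ (1 - a) :: l := fun h => by have := hmem _ h; omega
      have hbn' : 1 - b ∉ (1 - a) :: l := fun h => by have := hmem _ h; omega
      set g := ((1 - a) :: l).formPerm with hg
      have hgb : g b = b := List.formPerm_apply_of_notMem hbn
      have hgb' : g (1 - b) = 1 - b := List.formPerm_apply_of_notMem hbn'
      have hmem' : ∀ x ∈ ((1 - a) :: l).map g, x ∈ (1 - a) :: l := by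
        intro x hx
        obtain ⟨y, hy, rfl⟩ := List.mem_map.1 hx
        exact List.formPerm_apply_mem_of_mem hy
      -- here the product is conjugate by `g` to the cycle through `b, 1 - b, 1 - a, l`
      refine ⟨((1 - a) :: l).map g, ?_, by rw [List.length_map, hlen],
        fun x hx => hmem x (hmem' x hx), ?_⟩
      · refine List.nodup_cons.2 ⟨?_, List.nodup_cons.2 ⟨fun h => hbn' (hmem' _ h),
          hnd.map g.injective⟩⟩
        rw [List.mem_cons]; rintro (h | h)
        · omega
        · exact hbn (hmem' _ h)
      · have e1 : swap a b * windowRefl k = windowRefl k * swap (1 - a) b := by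
          rw [mul_swap_eq_swap_mul, windowRefl_apply, windowRefl_apply, if_pos (by omega),
            if_neg (by omega), sub_sub_cancel]
        have e2 := formPerm_extend (1 - a) b (1 - b) l hbn hbn'
        have e3 : b :: (1 - b) :: ((1 - a) :: l).map g = (b :: (1 - b) :: (1 - a) :: l).map g := by
          simp only [List.map_cons, hgb, hgb']
        rw [e3, ← conj_formPerm, ← e2, ← hg, hc, htr, windowRefl_succ k b hb, mul_assoc,
          ← mul_assoc (swap a b), e1, mul_assoc (windowRefl k), ← mul_assoc _ (windowRefl k), heq]
        group

/-! ### Inversions -/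

/-- The inversions of `g` among pairs of points of the window `1 - n, …, n`. -/
noncomputable def invs (n : ℕ) (g : Perm ℤ) : Finset (ℤ × ℤ) :=
  (Finset.Icc (1 - (n : ℤ)) n ×ˢ Finset.Icc (1 - (n : ℤ)) n).filter
    fun p => p.1 < p.2 ∧ g p.2 < g p.1

theorem mem_invs {n : ℕ} {g : Perm ℤ} {x y : ℤ} : (x, y) ∈ invs n g ↔
    ((1 - (n : ℤ) ≤ x ∧ x ≤ n) ∧ 1 - (n : ℤ) ≤ y ∧ y ≤ n) ∧ x < y ∧ g y < g x := by
  simp only [invs, Finset.mem_filter, Finset.mem_product, Finset.mem_Icc]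

theorem card_invs_mul_tr (n : ℕ) (g : Perm ℤ) (j : ℤ) (h1 : -(n : ℤ) < j) (h2 : j < n) :
    (invs n (g * tr j)).card ≤ (invs n g).card + 1 := by
  have : invs n (g * tr j) ⊆ insert (j, j + 1) ((invs n g).image (Prod.map (tr j) (tr j))) := by
    rintro ⟨x, y⟩ h
    rw [mem_invs, Perm.mul_apply, Perm.mul_apply] at h
    rw [Finset.mem_insert, Finset.mem_image]
    by_cases hxy : x = j ∧ y = j + 1
    · left; rw [hxy.1, hxy.2]
    · right
      refine ⟨(tr j x, tr j y), ?_, by simp [tr]⟩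
      rw [mem_invs]
      refine ⟨⟨?_, ?_⟩, ?_, h.2.2⟩ <;> simp only [tr, swap_apply_def] <;> split_ifs <;> omega
  calc _ ≤ _ := Finset.card_le_card this
    _ ≤ _ := Finset.card_insert_le _ _
    _ ≤ _ := Nat.add_le_add_right Finset.card_image_le 1

theorem card_invs_prod_le (n : ℕ) (L : List ℤ) (h : ∀ j ∈ L, -(n : ℤ) < j ∧ j < n) :
    (invs n (L.map tr).prod).card ≤ L.length := by
  induction L using List.reverseRecOn with
  | nil =>
    rw [List.length_nil, Nat.le_zero, Finset.card_eq_zero, invs, Finset.filter_eq_empty_iff]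
    intro p _
    simp; intro h; omega
  | append_singleton L j ih =>
    have hj := h j (by simp)
    have := card_invs_mul_tr n (L.map tr).prod j hj.1 hj.2
    have := ih fun x hx => h x (by simp [hx])
    simp; omega

theorem card_invs_windowRefl (n : ℕ) : n * (2 * n - 1) ≤ (invs n (windowRefl n)).card := by
  have h1 : ((Finset.range (2 * n)).sigma fun y => Finset.range y).card = n * (2 * n - 1) := by
    rw [Finset.card_sigma]; simp only [Finset.card_range]
    rw [Finset.sum_range_id, mul_assoc, Nat.mul_div_cancel_left _ (by norm_num)]
  rw [← h1]
  refine Finset.card_le_card_of_injOn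
    (fun p => ((p.2 : ℤ) + (1 - n), (p.1 : ℤ) + (1 - n))) ?_ ?_
  · rintro ⟨y, x⟩ h
    simp only [Finset.coe_sigma, Set.mem_sigma_iff, Finset.mem_coe, Finset.mem_range] at h
    dsimp only
    rw [Finset.mem_coe, mem_invs, windowRefl_apply, windowRefl_apply]
    refine ⟨by omega, by omega, ?_⟩
    split_ifs <;> omega
  · rintro ⟨y, x⟩ _ ⟨y', x'⟩ _ h
    simp only [Prod.mk.injEq] at h
    obtain rfl : y = y' := by omega
    obtain rfl : x = x' := by omega
    rfl

/-! ### The permutation representation and the word of the twisted Coxeter element -/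

theorem tr_braid_left (x : ℤ) : tr x * tr (x + 1) * tr x = swap x (x + 2) := by
  have h := swap_apply_apply (tr x) (x + 1) (x + 1 + 1)
  rw [tr, swap_inv] at h
  rw [tr, tr, ← h, swap_apply_right, swap_apply_of_ne_of_ne (by omega) (by omega), add_assoc]
  norm_num

theorem tr_braid_right (x : ℤ) : tr (x + 1) * tr x * tr (x + 1) = swap x (x + 2) := by
  have h := swap_apply_apply (tr (x + 1)) x (x + 1)
  rw [tr, swap_inv] at h
  rw [tr, tr, ← h, swap_apply_left, swap_apply_of_ne_of_ne (by omega) (by omega), add_assoc]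
  norm_num

theorem tr_isLiftable (n : ℕ) : (CoxeterMatrix.A (2 * n - 1)).IsLiftable
    fun i : Fin (2 * n - 1) => tr ((i : ℤ) - (n - 1)) := by
  intro i j
  change (tr ((i : ℤ) - (n - 1)) * tr ((j : ℤ) - (n - 1))) ^ ((CoxeterMatrix.A (2 * n - 1)).M i j) = 1
  rw [A_apply]
  by_cases hij : i = j
  · subst hij; rw [if_pos rfl, pow_one, tr_mul_self]
  rw [if_neg hij]
  have hij' : (i : ℕ) ≠ j := fun h => hij (Fin.ext h)
  generalize hx : (i : ℤ) - (n - 1) = x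
  generalize hy : (j : ℤ) - (n - 1) = y
  split_ifs with h
  · have : y + 1 = x ∨ x + 1 = y := by omega
    rcases this with rfl | rfl
    · calc _ = (tr (y + 1) * tr y * tr (y + 1)) * (tr y * tr (y + 1) * tr y) := by
            simp only [pow_succ, pow_zero, one_mul, mul_assoc]
        _ = 1 := by rw [tr_braid_left, tr_braid_right, swap_mul_self]
    · calc _ = (tr x * tr (x + 1) * tr x) * (tr (x + 1) * tr x * tr (x + 1)) := by
            simp only [pow_succ, pow_zero, one_mul, mul_assoc]
        _ = 1 := by rw [tr_braid_left, tr_braid_right, swap_mul_self]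
  · have : Commute (tr x) (tr y) := mul_swap_of_fixed _ _ _
      (swap_apply_of_ne_of_ne (by omega) (by omega)) (swap_apply_of_ne_of_ne (by omega) (by omega))
    rw [this.mul_pow, pow_two, pow_two, tr_mul_self, tr_mul_self, one_mul]

/-- If `v` is realised by conjugation by `r`, the product of the blocks `L.map v^[k]` telescopes
to `(c * r) ^ m * r⁻¹ ^ m`, where `c` is the product of the block `L`. -/
theorem prod_twisted {G B : Type*} [Group G] (r : G) (f : B → G) (v : B → B)
    (hv : ∀ b, f (v b) = r * f b * r⁻¹) (L : List B) (m : ℕ) :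
    ((((List.range m).flatMap fun k => L.map (v^[k])).map f).prod) =
      ((L.map f).prod * r) ^ m * (r⁻¹) ^ m := by
  have h1 : ∀ k, ((L.map (v^[k])).map f).prod = r ^ k * (L.map f).prod * (r⁻¹) ^ k := by
    intro k
    have : f ∘ v^[k] = fun b => MulAut.conj (r ^ k) (f b) := by
      funext b
      induction k with
      | zero => simp
      | succ k ih =>
        rw [Function.comp_apply, Function.iterate_succ_apply', hv, ← Function.comp_apply (f := f), ih]
        simp only [MulAut.conj_apply, pow_succ']; group
    rw [List.map_map, this, ← Function.comp_def, ← List.map_map, ← map_list_prod,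
      MulAut.conj_apply, inv_pow]
  induction m with
  | zero => simp
  | succ m ih =>
    rw [List.range_succ, List.flatMap_append, List.map_append, List.prod_append, ih]
    simp only [List.flatMap_singleton, h1]
    rw [pow_succ, pow_succ (r⁻¹)]
    have : (r⁻¹) ^ m * r ^ m = 1 := by rw [inv_pow, inv_mul_cancel]
    calc _ = ((L.map f).prod * r) ^ m * ((r⁻¹) ^ m * r ^ m) * (L.map f).prod * (r⁻¹) ^ m := by
          simp only [mul_assoc]
      _ = _ := by
          rw [this, mul_one, mul_assoc, mul_assoc, mul_assoc, ← pow_succ, pow_succ', mul_inv_cancel_left]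

theorem CommEquiv.perm {I : Type*} {M : CoxeterMatrix I} {l l' : List I} (h : CommEquiv M l l') :
    l.Perm l' := by
  induction h with
  | refl l => rfl
  | swap a b k l h => exact (List.Perm.swap _ _ _).append_left a
  | trans _ _ h1 h2 => exact h1.trans h2

end TwistedCoxeter

open TwistedCoxeter in
/-- In type `A_{2n-1}` with the diagram automorphism `i^∨ = 2n - i`
(i.e. `a ↦ 2n - 2 - a` on `Fin (2n-1)`), for a twisted Coxeter element
`s_{j_1} ⋯ s_{j_n}` (one letter chosen from each `∨`-orbit), the word
`w̃₀ = ∏_{k=0}^{2n-2} (s_{j_1} ⋯ s_{j_n})^{k∨}` is a reduced expression of the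
longest element `w₀` of length `n(2n-1)`, each `∨`-orbit of indices contributes
exactly `2n-1` of its letters, and the same holds for every word in its
commutation class (the twisted adapted class). -/
theorem stmt7 {W : Type*} [Group W] (n : ℕ) (hn : 1 ≤ n)
    (cs : CoxeterSystem (CoxeterMatrix.Aₙ (2 * n - 1)) W)
    (vee : Fin (2 * n - 1) → Fin (2 * n - 1))
    (hvee : ∀ a, (vee a).1 = 2 * n - 2 - a.1)
    (js : List (Fin (2 * n - 1))) (hlen : js.length = n) (hnodup : js.Nodup)
    (hcover : ∀ i, i ∈ js ∨ vee i ∈ js)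
    (word : List (Fin (2 * n - 1)))
    (hword : word = (List.range (2 * n - 1)).flatMap fun k => js.map (vee^[k])) :
    word.length = n * (2 * n - 1) ∧
      cs.IsReduced word ∧
      (∀ w : W, cs.length w ≤ cs.length (cs.wordProd word)) ∧
      (∀ i, word.countP (fun a => a == i || a == vee i) = 2 * n - 1) ∧
      (∀ word' : List (Fin (2 * n - 1)), CommEquiv (CoxeterMatrix.Aₙ (2 * n - 1)) word word' →
        ∀ i, word'.countP (fun a => a == i || a == vee i) = 2 * n - 1) := by
  have hwl : word.length = n * (2 * n - 1) := by
    rw [hword, List.length_flatMap]; simp [hlen, mul_comm]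
  -- centred letters, for which `vee` is negation
  let c : Fin (2 * n - 1) → ℤ := fun i => (i : ℤ) - (n - 1)
  have hcb : ∀ i, -(n : ℤ) < c i ∧ c i < n := fun i => by
    have := i.2; simp only [c]; omega
  have hcv : ∀ i, c (vee i) = -c i := fun i => by
    have := i.2; have := hvee i; simp only [c]; omega
  have hcinj : ∀ i j, (c i).natAbs = (c j).natAbs ↔ (i = j ∨ i = vee j) := fun i j => by
    have := i.2; have := j.2; have := hvee j
    rw [Fin.ext_iff, Fin.ext_iff]; simp only [c]; omega
  have hjs : ((js.map c).map Int.natAbs).Perm (List.range n) := by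
    refine (List.Subperm.perm_of_length_le (List.subperm_of_subset List.nodup_range ?_) ?_).symm
    · intro m hm
      rw [List.mem_range] at hm
      have hi : n - 1 + m < 2 * n - 1 := by omega
      have hci : (c ⟨n - 1 + m, hi⟩).natAbs = m := by simp only [c]; omega
      rw [List.map_map, List.mem_map]
      rcases hcover ⟨n - 1 + m, hi⟩ with h | h
      · exact ⟨_, h, hci⟩
      · exact ⟨_, h, by rw [Function.comp_apply, hcv, Int.natAbs_neg, hci]⟩
    · simp [hlen]
  have hcount : ∀ i, word.countP (fun a => a == i || a == vee i) = 2 * n - 1 := by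
    intro i
    have hp : (fun a => a == i || a == vee i) =
        (fun m => m == (c i).natAbs) ∘ fun a => (c a).natAbs := by
      funext a
      rw [Bool.eq_iff_iff]
      simp [hcinj]
    have hk : ∀ k, (fun a => (c a).natAbs) ∘ vee^[k] = fun a => (c a).natAbs := by
      intro k
      funext a
      induction k with
      | zero => rfl
      | succ k ih =>
        rw [Function.comp_apply, Function.iterate_succ_apply', hcv, Int.natAbs_neg]
        exact ih
    have h1 : ∀ k, (js.map (vee^[k])).countP (fun a => a == i || a == vee i) = 1 := by
      intro k
      rw [hp, ← List.countP_map, List.map_map, hk]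
      have : js.map (fun a => (c a).natAbs) = (js.map c).map Int.natAbs := by
        rw [List.map_map]; rfl
      rw [this, hjs.countP_eq]
      have := hcb i
      exact List.count_eq_one_of_mem List.nodup_range (List.mem_range.2 (by omega))
    rw [hword, List.countP_flatMap]
    have : (List.countP (fun a => a == i || a == vee i) ∘ fun k => js.map (vee^[k])) =
      fun _ => 1 := funext h1
    rw [this]; simp
  let φ : W →* Equiv.Perm ℤ := cs.lift ⟨_, tr_isLiftable n⟩
  have hφ : ∀ ω, φ (cs.wordProd ω) = ((ω.map c).map tr).prod := by
    intro ω
    rw [CoxeterSystem.wordProd, map_list_prod, List.map_map, List.map_map]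
    congr 2
    funext i
    exact cs.lift_apply_simple (tr_isLiftable n) i
  have hφw : φ (cs.wordProd word) = windowRefl n := by
    have hv : ∀ b, (tr ∘ c) (vee b) = windowRefl n * (tr ∘ c) b * (windowRefl n)⁻¹ := fun b => by
      simp only [Function.comp_apply, hcv]
      exact windowRefl_conj_tr n _ (hcb b).1 (hcb b).2
    obtain ⟨l, hnd, hll, -, heq⟩ := twisted_cycle n hn _ hjs n (Or.inl rfl)
    have hinv : (windowRefl n)⁻¹ = windowRefl n := inv_eq_of_mul_eq_one_left (windowRefl_mul_self n)
    rw [hφ, List.map_map, hword, prod_twisted (windowRefl n) (tr ∘ c) vee hv, ← List.map_map, heq,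
      ← hll, List.formPerm_pow_length_eq_one_of_nodup _ hnd, hll, one_mul, hinv]
    obtain ⟨m, rfl⟩ : ∃ m, n = m + 1 := ⟨n - 1, by omega⟩
    have : 2 * (m + 1) - 1 = 2 * m + 1 := by omega
    rw [this, pow_succ, pow_mul, pow_two, windowRefl_mul_self, one_pow, one_mul]
  have hlow : n * (2 * n - 1) ≤ cs.length (cs.wordProd word) := by
    obtain ⟨ω, hω, hω'⟩ := cs.exists_isReduced (cs.wordProd word)
    have h1 := card_invs_prod_le n (ω.map c) fun j hj => by
      obtain ⟨i, -, rfl⟩ := List.mem_map.1 hj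
      exact hcb i
    rw [← hφ, ← hω', hφw, List.length_map, ← hω.eq, ← hω'] at h1
    exact (card_invs_windowRefl n).trans h1
  have hup : ∀ w, cs.length w ≤ n * (2 * n - 1) := by
    intro w
    have h : 2 * cs.length w ≤ _ := length_le (2 * n - 1) cs w
    have h2 : 2 * n - 1 + 1 = 2 * n := by omega
    rw [h2] at h
    have : (2 * n - 1) * (2 * n) = 2 * (n * (2 * n - 1)) := by ring
    omega
  refine ⟨hwl, ?_, fun w => (hup w).trans hlow, hcount, fun word' h i => ?_⟩
  · exact le_antisymm (cs.length_wordProd_le word) (hwl ▸ hlow)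
  · rw [← h.perm.countP_eq, hcount]
end

section
/- In type $D_{n+1}$ with the diagram automorphism swapping nodes $n$ and $n+1$ and fixing the others, the word $\widetilde{w}_0 = \prod_{k=0}^{n}(s_1 s_2 \cdots s_n)^{k\vee}$ is a reduced expression of the longest element $w_0$, of length $n(n+1)$. -/
/-!
Write `c = s₁ ⋯ s_n`, so that the word is `c c^∨ c c^∨ ⋯` with `n + 1` blocks, and let `x` be its
product. Indices below start at `0`, as in `Fin (n + 1)`.

*Lower bound.* The group acts on integer vectors by signed permutations. Each simple reflection
creates at most one new negative positive root (`card_negRoots_act_le`), so the number of positive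
roots negative on `w • ρ` is at most `ℓ(w)`. The `∨` automorphism is conjugation by the sign change
of the last coordinate, and `c` followed by that sign change is a Coxeter element of type
`B_{n+1}`, whose `(n+1)`-st power is `-1` (`vectorRep_blocks`). Hence `x • ρ = -ρ`, all `n(n+1)`
positive roots become negative, and the word, which has `n(n+1)` letters, is reduced.

*Maximality.* An element all of whose simple right multiples are shorter is longest
(`length_le_of_forall_descent`). This follows from the exchange condition (`exchange`), proved with
the action of the group on pairs (group element, sign). To see that every `s_b` shortens `x`, it is
moved leftwards through the blocks: `c s_i = s_{i+1} c` for `i < n - 1`, while the `∨` between two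
blocks swaps `s_{n-1}` and `s_n`. At the end of its own block `s_{n-1}` cancels; `s_n` is turned
into the highest reflection of the type `A_n` parabolic of the preceding block, which `c` in turn
conjugates to `s_0`, the first letter of `c`, where it cancels (`partialProd_highest`,
`blocks_mul_last`). The number of blocks is just enough for this to happen for every letter.
-/

/-- Adjacency in the Dynkin diagram of type `D_{n+1}`, with vertices indexed by
`Fin (n+1)` (index `a` corresponds to the label `a+1` of the paper): a path on
labels `1, …, n` together with the fork edge joining label `n+1` to label `n-1`. -/
def DnpAdj (n : ℕ) (i j : Fin (n + 1)) : Prop :=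
  (i.1 + 1 = j.1 ∧ j.1 ≤ n - 1) ∨ (j.1 + 1 = i.1 ∧ i.1 ≤ n - 1) ∨
    (i.1 = n ∧ j.1 = n - 2) ∨ (j.1 = n ∧ i.1 = n - 2)

instance (n : ℕ) (i j : Fin (n + 1)) : Decidable (DnpAdj n i j) := by
  unfold DnpAdj; infer_instance

/-! ### The exchange condition and longest elements -/

open Classical in
/-- The truth value of `t = s`. -/
noncomputable def hit {G : Type*} (t s : G) : Bool := decide (t = s)

theorem hit_congr {G : Type*} {t s t' s' : G} (h : t = s ↔ t' = s') : hit t s = hit t' s' := by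
  exact decide_eq_decide.mpr h

open Classical in
theorem hit_of_ne {G : Type*} {t s : G} (h : t ≠ s) : hit t s = false := decide_eq_false h

/-- The action of an involution `s` on pairs (group element, sign) underlying the exchange
condition: conjugate the element by `s`, and flip the sign when the element is `s` itself. -/
noncomputable def titsStep {G : Type*} [Group G] (s : G) : Function.End (G × Bool) :=
  fun p => (s * p.1 * s, xor p.2 (hit p.1 s))

theorem titsStep_sq {G : Type*} [Group G] {s : G} (hs : s * s = 1) :
    titsStep s * titsStep s = 1 := by
  funext p
  obtain ⟨t, b⟩ := p
  have h1 : s * (s * t * s) * s = t := by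
    calc s * (s * t * s) * s = (s * s) * t * (s * s) := by group
      _ = t := by simp [hs]
  have h2 : hit (s * t * s) s = hit t s := by
    apply hit_congr
    constructor
    · intro h
      calc t = s * (s * t * s) * s := h1.symm
        _ = s := by rw [h, hs, one_mul]
    · rintro rfl; rw [hs, one_mul]
  change ((s * (s * t * s) * s, xor (xor b (hit t s)) (hit (s * t * s) s)) : G × Bool) = (t, b)
  rw [h1, h2]
  simp

theorem titsStep_comm {G : Type*} [Group G] {s u : G} (hs : s * s = 1) (hu : u * u = 1)
    (h : s * u = u * s) : (titsStep s * titsStep u) ^ 2 = 1 := by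
  have hc : titsStep s * titsStep u = titsStep u * titsStep s := by
    funext p
    obtain ⟨t, b⟩ := p
    have h1 : s * (u * t * u) * s = u * (s * t * s) * u := by
      calc s * (u * t * u) * s = (s * u) * t * (u * s) := by group
        _ = (u * s) * t * (s * u) := by rw [h]
        _ = _ := by group
    have h2 : hit (u * t * u) s = hit t s := by
      apply hit_congr
      have : s = u * s * u := by rw [← h, mul_assoc, hu, mul_one]
      conv_lhs => rw [this]
      rw [mul_left_inj, mul_right_inj]
    have h3 : hit (s * t * s) u = hit t u := by
      apply hit_congr
      have : u = s * u * s := by rw [h, mul_assoc, hs, mul_one]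
      conv_lhs => rw [this]
      rw [mul_left_inj, mul_right_inj]
    change ((s * (u * t * u) * s, xor (xor b (hit t u)) (hit (u * t * u) s)) : G × Bool) =
      (u * (s * t * s) * u, xor (xor b (hit t s)) (hit (s * t * s) u))
    rw [h1, h2, h3]
    cases b <;> cases hit t s <;> cases hit t u <;> rfl
  rw [pow_two, mul_assoc, ← mul_assoc (titsStep u), ← hc, mul_assoc (titsStep s),
    titsStep_sq hu, mul_one, titsStep_sq hs]

theorem titsStep_braid {G : Type*} [Group G] {s u : G} (hs : s * s = 1) (hu : u * u = 1)
    (h : s * u * s = u * s * u) : (titsStep s * titsStep u) ^ 3 = 1 := by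
  have key : ∀ {s u : G}, s * s = 1 → u * u = 1 → s * u * s = u * s * u → ∀ t : G,
      (s * (u * t * u) * s = u ↔ t = s) := by
    intro s u hs hu h t
    have : s * (u * s * u) * s = u := by
      rw [← h]
      calc _ = (s * s) * u * (s * s) := by group
        _ = _ := by simp [hs]
    constructor
    · intro e
      simpa only [mul_left_inj, mul_right_inj] using e.trans this.symm
    · rintro rfl; exact this
  have hc : titsStep s * titsStep u * titsStep s = titsStep u * titsStep s * titsStep u := by
    funext p
    obtain ⟨t, b⟩ := p
    have h1 : s * (u * (s * t * s) * u) * s = u * (s * (u * t * u) * s) * u := by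
      calc s * (u * (s * t * s) * u) * s = (s * u * s) * t * (s * u * s) := by group
        _ = (u * s * u) * t * (u * s * u) := by rw [h]
        _ = _ := by group
    have h2 : hit (s * t * s) u = hit (u * t * u) s := by
      have e : s * (u * (u * t * u) * u) * s = s * t * s := by
        calc s * (u * (u * t * u) * u) * s = s * ((u * u) * t * (u * u)) * s := by group
          _ = _ := by simp [hu]
      apply hit_congr
      rw [← key hs hu h (u * t * u), e]
    have h3 := hit_congr (key hs hu h t)
    have h4 := hit_congr (key hu hs h.symm t)
    change ((s * (u * (s * t * s) * u) * s, xor (xor (xor b (hit t s)) (hit (s * t * s) u))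
        (hit (u * (s * t * s) * u) s)) : G × Bool) =
      (u * (s * (u * t * u) * s) * u, xor (xor (xor b (hit t u)) (hit (u * t * u) s))
        (hit (s * (u * t * u) * s) u))
    rw [h1, h2, h3, h4]
    cases b <;> cases hit t s <;> cases hit t u <;> cases hit (u * t * u) s <;> rfl
  have e : (titsStep s * titsStep u) ^ 3 =
      (titsStep s * titsStep u * titsStep s) * (titsStep u * titsStep s * titsStep u) := by
    simp only [pow_succ, pow_zero, one_mul, mul_assoc]
  rw [e, ← hc]
  calc _ = titsStep s * titsStep u * (titsStep s * titsStep s) * titsStep u * titsStep s := by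
        simp only [mul_assoc]
    _ = titsStep s * (titsStep u * titsStep u) * titsStep s := by
        rw [titsStep_sq hs, mul_one, mul_assoc (titsStep s)]
    _ = 1 := by rw [titsStep_sq hu, mul_one, titsStep_sq hs]

section
variable {B W : Type*} [Group W] {M : CoxeterMatrix B} (cs : CoxeterSystem M W)

theorem simple_comm {i j : B} (h : M.M i j = 2) :
    cs.simple i * cs.simple j = cs.simple j * cs.simple i := by
  have := cs.simple_mul_simple_pow i j
  rw [h] at this
  have h2 := eq_inv_of_mul_eq_one_left ((pow_two _).symm.trans this)
  simpa using h2

theorem simple_braid {i j : B} (h : M.M i j = 3) :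
    cs.simple i * cs.simple j * cs.simple i = cs.simple j * cs.simple i * cs.simple j := by
  have := cs.simple_mul_simple_pow i j
  rw [h] at this
  have h2 : (cs.simple i * cs.simple j * cs.simple i) *
      (cs.simple j * cs.simple i * cs.simple j) = 1 := by
    rw [← this]; simp only [pow_succ, pow_zero, one_mul, mul_assoc]
  have h2 := eq_inv_of_mul_eq_one_left h2
  simpa [mul_assoc] using h2

theorem titsStep_liftable (hM : ∀ i j, M.M i j = 1 ∨ M.M i j = 2 ∨ M.M i j = 3) :
    M.IsLiftable fun i => titsStep (cs.simple i) := by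
  intro i j
  have hs := cs.simple_mul_simple_self
  rcases hM i j with h | h | h
  · have : i = j := by
      by_contra hne
      exact M.off_diagonal i j hne h
    subst this
    simp [titsStep_sq (hs i)]
  · have := titsStep_comm (hs i) (hs j) (simple_comm cs h)
    rwa [← h] at this
  · have := titsStep_braid (hs i) (hs j) (simple_braid cs h)
    rwa [← h] at this

/-- The exchange condition: a right descent of the product of a word is realised by deleting one
letter. -/
theorem exchange (hM : ∀ i j, M.M i j = 1 ∨ M.M i j = 2 ∨ M.M i j = 3) (ω : List B) (i : B)
    (hd : cs.length (cs.wordProd ω * cs.simple i) < cs.length (cs.wordProd ω)) :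
    ∃ j < ω.length, cs.wordProd ω * cs.simple i = cs.wordProd (ω.eraseIdx j) := by
  let Φ := cs.lift ⟨_, titsStep_liftable cs hM⟩
  have hΦ : ∀ i, Φ (cs.simple i) = titsStep (cs.simple i) := cs.lift_apply_simple _
  -- The sign of `s i` can flip only if `s i` is in the right inversion sequence.
  have hflip : ∀ (ω : List B) (t : W) (b : Bool), t ∉ cs.rightInvSeq ω →
      Φ (cs.wordProd ω) (t, b) = (cs.wordProd ω * t * (cs.wordProd ω)⁻¹, b) := by
    intro ω t b
    induction ω with
    | nil =>
      intro _
      rw [cs.wordProd_nil, map_one]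
      simp only [one_mul, inv_one, mul_one]
      rfl
    | cons k ω ih =>
      intro h
      simp only [CoxeterSystem.rightInvSeq, List.mem_cons, not_or] at h
      rw [cs.wordProd_cons, map_mul, hΦ]
      change titsStep (cs.simple k) (Φ (cs.wordProd ω) (t, b)) = _
      rw [ih h.2]
      have : ¬ (cs.wordProd ω * t * (cs.wordProd ω)⁻¹ = cs.simple k) := by
        intro e
        apply h.1
        rw [← e]; group
      simp only [titsStep, hit_of_ne this, Bool.xor_false]
      simp [mul_assoc]
  have hmem : cs.simple i ∈ cs.rightInvSeq ω := by
    by_contra hn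
    obtain ⟨ω', hω', he⟩ := cs.exists_isReduced (cs.wordProd ω * cs.simple i)
    have hn' : cs.simple i ∉ cs.rightInvSeq ω' := by
      intro hm
      have := (cs.isRightInversion_of_mem_rightInvSeq hω' hm).2
      rw [← he] at this
      simp at this
      omega
    have h1 := hflip ω (cs.simple i) false hn
    have h2 := hflip ω' (cs.simple i) true hn'
    rw [← he, map_mul, hΦ] at h2
    change Φ (cs.wordProd ω) (titsStep (cs.simple i) (cs.simple i, true)) = _ at h2
    simp only [titsStep, cs.simple_mul_simple_self, one_mul, hit, decide_true, Bool.xor_self,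
      h1, Prod.mk.injEq] at h2
    exact absurd h2.2 (by decide)
  obtain ⟨j, hj, e⟩ := List.getElem_of_mem hmem
  refine ⟨j, by simpa using hj, ?_⟩
  rw [← cs.wordProd_mul_getD_rightInvSeq, List.getD_eq_getElem _ _ hj, e]

/-- An element all of whose right multiplications by simple reflections are shorter is longest:
by the exchange condition every reduced word is the tail of a reduced word of that element. -/
theorem length_le_of_forall_descent
    (hM : ∀ i j, M.M i j = 1 ∨ M.M i j = 2 ∨ M.M i j = 3) (x : W)
    (hx : ∀ i, cs.length (x * cs.simple i) < cs.length x) (w : W) :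
    cs.length w ≤ cs.length x := by
  have main : ∀ ω : List B, cs.IsReduced ω → ∃ y : List B,
      y.length + ω.length = cs.length x ∧ cs.wordProd (y ++ ω) = x := by
    intro ω
    induction ω using List.reverseRecOn with
    | nil =>
      intro _
      obtain ⟨y, hy, e⟩ := cs.exists_isReduced x
      exact ⟨y, by rw [e, hy.eq]; simp, by simp [e]⟩
    | append_singleton ω i ih =>
      intro hr
      have hr' : cs.IsReduced ω := by simpa using hr.take ω.length
      obtain ⟨y, hy, e⟩ := ih hr'
      obtain ⟨j, hj, hj'⟩ := exchange cs hM (y ++ ω) i (by rw [e]; exact hx i)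
      rcases lt_or_ge j y.length with h | h
      · refine ⟨y.eraseIdx j, ?_, ?_⟩
        · rw [List.length_eraseIdx_of_lt h, List.length_append]
          simp; omega
        · rw [List.eraseIdx_append_of_lt_length h] at hj'
          rw [← List.append_assoc, cs.wordProd_append, ← hj', e]
          simp
      · exfalso
        rw [List.eraseIdx_append_of_length_le h, cs.wordProd_append, cs.wordProd_append,
          mul_assoc, mul_right_inj] at hj'
        have h1 := hr.eq
        have h2 := cs.length_wordProd_le (ω.eraseIdx (j - y.length))
        rw [cs.wordProd_append, cs.wordProd_singleton, hj', List.length_append] at h1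
        have h3 := List.length_eraseIdx_le (l := ω) (i := j - y.length)
        simp at h1
        omega
  obtain ⟨ω, hω, rfl⟩ := cs.exists_isReduced w
  obtain ⟨y, hy, -⟩ := main ω hω
  rw [hω.eq]; omega

end

/-! ### Signed permutations and negative roots -/

/-- The action of the simple reflections of type `D_{n+1}` on integer vectors: for `a < n` swap the
coordinates `a` and `a + 1`, and otherwise swap the coordinates `n - 1` and `n` with a change of
both signs. Coordinates beyond `n` are inert. -/
def act (n a : ℕ) : Function.End (ℕ → ℤ) := fun v j =>
  if a < n then (if j = a then v (a + 1) else if j = a + 1 then v a else v j)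
  else (if j = n - 1 then -v n else if j = n then -v (n - 1) else v j)

theorem act_sq {n : ℕ} (hn : 2 ≤ n) (a : ℕ) : act n a * act n a = 1 := by
  funext v j
  change act n a (act n a v) j = v j
  unfold act
  grind

theorem act_comm {n : ℕ} (hn : 2 ≤ n) {a b : ℕ} (h : (a + 2 ≤ b ∧ b < n) ∨ (b = n ∧ a + 2 < n) ∨
    (b = n ∧ a + 1 = n)) : act n a * act n b = act n b * act n a := by
  funext v j
  change act n a (act n b v) j = act n b (act n a v) j
  unfold act
  grind

theorem act_braid {n : ℕ} (hn : 2 ≤ n) {a b : ℕ} (h : (a + 1 = b ∧ b < n) ∨ (b = n ∧ a + 2 = n)) :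
    act n a * act n b * act n a = act n b * act n a * act n b := by
  funext v j
  change act n a (act n b (act n a v)) j = act n b (act n a (act n b v)) j
  unfold act
  grind

/-- The positive roots of `D_{n+1}` that are negative on `v`. The ordered pair `(i, j)` stands for
`e_i - e_j` if `i < j` and for `e_i + e_j` if `j < i`. -/
def negRoots (n : ℕ) (v : ℕ → ℤ) : Finset (ℕ × ℕ) :=
  ((Finset.range (n + 1)).offDiag).filter fun p =>
    if p.1 < p.2 then v p.1 < v p.2 else v p.1 + v p.2 < 0

/-- The permutation of the positive roots other than `α_a` induced by the simple reflection `a`,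
extended by the identity to `α_a`. -/
def rootMap (n a : ℕ) (p : ℕ × ℕ) : ℕ × ℕ :=
  if a < n then
    if (p.1 = a ∧ p.2 = a + 1) ∨ (p.1 = a + 1 ∧ p.2 = a) then p
    else (if p.1 = a then a + 1 else if p.1 = a + 1 then a else p.1,
      if p.2 = a then a + 1 else if p.2 = a + 1 then a else p.2)
  else
    if (p.1 = n - 1 ∧ p.2 = n) ∨ (p.1 = n ∧ p.2 = n - 1) then p
    else if p.2 = n - 1 then (n, p.1)
    else if p.2 = n then (n - 1, p.1)
    else if p.1 = n then (p.2, n - 1)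
    else if p.1 = n - 1 then (p.2, n)
    else p

theorem rootMap_rootMap {n a : ℕ} {p : ℕ × ℕ}
    (hp : p ∈ (Finset.range (n + 1)).offDiag) : rootMap n a (rootMap n a p) = p := by
  obtain ⟨i, j⟩ := p
  simp only [Finset.mem_offDiag, Finset.mem_range] at hp
  by_cases h : a < n
  · simp only [rootMap, h, if_true]
    grind
  · simp only [rootMap, h, if_false]
    by_cases h1 : (i = n - 1 ∧ j = n) ∨ (i = n ∧ j = n - 1)
    · simp [h1]
    by_cases h2 : j = n - 1
    · grind
    by_cases h3 : j = n
    · grind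
    grind

/-- A simple reflection creates at most one new negative root, namely `α_a`. -/
theorem card_negRoots_act_le {n : ℕ} (hn : 2 ≤ n) {a : ℕ} (ha : a ≤ n) (v : ℕ → ℤ) :
    (negRoots n (act n a v)).card ≤ (negRoots n v).card + 1 := by
  let α : ℕ × ℕ := if a < n then (a, a + 1) else (n, n - 1)
  have h1 : ((negRoots n (act n a v)).erase α).card ≤ (negRoots n v).card := by
    apply Finset.card_le_card_of_injOn (rootMap n a)
    · rintro ⟨i, j⟩ hp
      simp only [negRoots, Finset.coe_erase, Set.mem_sdiff, Finset.mem_coe, Finset.mem_filter,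
        Finset.mem_offDiag, Finset.mem_range, Set.mem_singleton_iff] at hp ⊢
      simp only [α, act, rootMap] at hp ⊢
      by_cases h : a < n
      · simp only [h, if_true] at hp ⊢
        grind
      · simp only [h, if_false] at hp ⊢
        grind
    · intro p hp q hq e
      simp only [negRoots, Finset.coe_erase, Set.mem_sdiff, Finset.mem_coe, Finset.mem_filter] at hp hq
      rw [← rootMap_rootMap (a := a) hp.1.1, e, rootMap_rootMap hq.1.1]
  have h2 := Finset.pred_card_le_card_erase (s := negRoots n (act n a v)) (a := α)
  omega

/-- The dominant regular vector `(n, n - 1, …, 1, 0)`. -/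
def rho (n : ℕ) : ℕ → ℤ := fun j => n - j

theorem negRoots_rho (n : ℕ) : negRoots n (rho n) = ∅ := by
  rw [negRoots, Finset.filter_eq_empty_iff]
  rintro ⟨i, j⟩ hp
  simp only [Finset.mem_offDiag, Finset.mem_range] at hp
  simp only [rho]
  split_ifs <;> omega

theorem card_negRoots_neg {n : ℕ} {v : ℕ → ℤ} (hv : ∀ j ≤ n, v j = j - n) :
    (negRoots n v).card = n * (n + 1) := by
  have : negRoots n v = (Finset.range (n + 1)).offDiag := by
    rw [negRoots, Finset.filter_eq_self]
    rintro ⟨i, j⟩ hp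
    simp only [Finset.mem_offDiag, Finset.mem_range] at hp
    simp only [hv i (by omega), hv j (by omega)]
    split_ifs <;> omega
  rw [this, Finset.offDiag_card, Finset.card_range]
  rw [Nat.sub_eq_iff_eq_add (by nlinarith)]
  ring

/-- Change of sign of the last coordinate: the diagram automorphism is conjugation by it. -/
def signLast (n : ℕ) : Function.End (ℕ → ℤ) := fun v j => if j = n then -v j else v j

theorem signLast_sq (n : ℕ) : signLast n * signLast n = 1 := by
  funext v j
  change signLast n (signLast n v) j = v j
  unfold signLast
  grind

theorem signLast_pow_mul_pow (n k : ℕ) : signLast n ^ k * signLast n ^ k = 1 := by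
  rw [← (Commute.refl (signLast n)).mul_pow, signLast_sq, one_pow]

theorem signLast_conj {n : ℕ} (hn : 2 ≤ n) {a b : ℕ} (ha : a ≤ n)
    (h : b = if a = n - 1 then n else if a = n then n - 1 else a) :
    act n b = signLast n * act n a * signLast n := by
  funext v j
  change act n b v j = signLast n (act n a (signLast n v)) j
  unfold signLast act
  grind

theorem prod_act_range (n m : ℕ) (hm : m ≤ n) (v : ℕ → ℤ) :
    ((List.range m).map (act n)).prod v =
      fun j => if j = 0 then v m else if j ≤ m then v (j - 1) else v j := by
  induction m generalizing v with
  | zero =>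
    funext j
    change v j = _
    grind
  | succ m ih =>
    rw [List.range_succ, List.map_append, List.prod_append]
    change ((List.range m).map (act n)).prod (((List.map (act n) [m]).prod) v) = _
    rw [ih (by omega)]
    funext j
    simp only [List.map_singleton, List.prod_singleton, act]
    grind

theorem prod_map_conj {G ι : Type*} [Monoid G] {d : G} (hd : d * d = 1) (f : ι → G) (l : List ι) :
    (l.map fun i => d * f i * d).prod = d * (l.map f).prod * d := by
  induction l with
  | nil => simp [hd]
  | cons a l ih =>
    simp only [List.map_cons, List.prod_cons, ih]
    calc _ = d * f a * (d * d) * (l.map f).prod * d := by simp only [mul_assoc]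
      _ = _ := by rw [hd, mul_one]; simp only [mul_assoc]

/-! ### Products of simple reflections in type A -/

/-- The partial products `f 0 * f 1 * ⋯ * f (m - 1)` of a Coxeter-type element. -/
def partialProd {G : Type*} [Group G] (f : ℕ → G) (m : ℕ) : G := ((List.range m).map f).prod

section
variable {G : Type*} [Group G]

theorem partialProd_succ (f : ℕ → G) (m : ℕ) :
    partialProd f (m + 1) = partialProd f m * f m := by
  simp [partialProd, List.range_succ]

theorem partialProd_succ' (f : ℕ → G) (m : ℕ) :
    partialProd f (m + 1) = f 0 * partialProd (fun i => f (i + 1)) m := by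
  simp [partialProd, List.range_succ_eq_map, Function.comp_def]

theorem partialProd_congr {f g : ℕ → G} {m : ℕ} (h : ∀ i < m, f i = g i) :
    partialProd f m = partialProd g m := by
  unfold partialProd
  congr 1
  apply List.map_congr_left
  intro i hi
  exact h i (List.mem_range.1 hi)

theorem partialProd_comm {f : ℕ → G} {m : ℕ} {g : G} (h : ∀ i < m, f i * g = g * f i) :
    partialProd f m * g = g * partialProd f m := by
  induction m with
  | zero => simp [partialProd]
  | succ m ih =>
    rw [partialProd_succ, mul_assoc, h m (by omega), ← mul_assoc, ih fun i hi => h i (by omega),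
      mul_assoc]

/-- In type `A`, conjugation by the Coxeter element shifts the simple reflections. -/
theorem partialProd_shift {f : ℕ → G} {n : ℕ}
    (hb : ∀ i, i + 1 < n → f i * f (i + 1) * f i = f (i + 1) * f i * f (i + 1))
    (hc : ∀ i j, i + 2 ≤ j → j < n → f i * f j = f j * f i) {i m : ℕ} (hi : i + 2 ≤ m)
    (hm : m ≤ n) : partialProd f m * f i = f (i + 1) * partialProd f m := by
  induction m, hi using Nat.le_induction with
  | base =>
    rw [partialProd_succ, partialProd_succ]
    have h1 := partialProd_comm (f := f) (m := i) (g := f (i + 1))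
      fun j hj => hc j (i + 1) (by omega) (by omega)
    calc _ = partialProd f i * (f i * f (i + 1) * f i) := by simp only [mul_assoc]
      _ = partialProd f i * f (i + 1) * (f i * f (i + 1)) := by
        rw [hb i (by omega)]; simp only [mul_assoc]
      _ = _ := by rw [h1]; simp only [mul_assoc]
  | succ m hm' ih =>
    rw [partialProd_succ, mul_assoc, ← hc i m hm' (by omega), ← mul_assoc, ih (by omega),
      mul_assoc]

/-- In type `A`, the Coxeter element sends the highest reflection to the first simple one. -/
theorem partialProd_highest {f : ℕ → G} {n : ℕ}
    (hb : ∀ i, i + 1 < n + 1 → f i * f (i + 1) * f i = f (i + 1) * f i * f (i + 1))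
    (hc : ∀ i j, i + 2 ≤ j → j < n + 1 → f i * f j = f j * f i) (h0 : f 0 * f 0 = 1) :
    partialProd f (n + 1) * (partialProd f n * f n * (partialProd f n)⁻¹) =
      partialProd (fun i => f (i + 1)) n := by
  have h1 : ∀ m ≤ n, partialProd (fun i => f (i + 1)) m * partialProd f (n + 1) =
      partialProd f (n + 1) * partialProd f m := by
    intro m hm
    induction m with
    | zero => simp [partialProd]
    | succ m ih =>
      rw [partialProd_succ, partialProd_succ f m, mul_assoc,
        ← partialProd_shift hb hc (by omega) le_rfl, ← mul_assoc, ih (by omega), mul_assoc]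
  have h2 := h1 n le_rfl
  rw [← partialProd_succ, ← mul_assoc, mul_inv_eq_iff_eq_mul]
  calc _ = f 0 * (partialProd (fun i => f (i + 1)) n * partialProd f (n + 1)) := by
        rw [← mul_assoc, ← partialProd_succ']
    _ = (f 0 * f 0) * (partialProd (fun i => f (i + 1)) n * partialProd f n) := by
        rw [h2, partialProd_succ']; simp only [mul_assoc]
    _ = _ := by rw [h0, one_mul]
end

/-! ### The representation on vectors -/

section
variable {W : Type*} [Group W] {n : ℕ} {M : CoxeterMatrix (Fin (n + 1))} (cs : CoxeterSystem M W)

theorem act_liftable (hn : 2 ≤ n)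
    (hM : ∀ i j, M.M i j = if i = j then 1 else if DnpAdj n i j then 3 else 2) :
    M.IsLiftable fun i : Fin (n + 1) => act n i.1 := by
  have comm : ∀ {f g : Function.End (ℕ → ℤ)}, f * f = 1 → g * g = 1 → f * g = g * f →
      (f * g) ^ 2 = 1 := by
    intro f g hf hg h
    rw [(show Commute f g from h).mul_pow, pow_two, pow_two, hf, hg, one_mul]
  have braid : ∀ {f g : Function.End (ℕ → ℤ)}, f * f = 1 → g * g = 1 → f * g * f = g * f * g →
      (f * g) ^ 3 = 1 := by
    intro f g hf hg h
    calc (f * g) ^ 3 = (f * g * f) * (g * f * g) := by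
          simp only [pow_succ, pow_zero, one_mul, mul_assoc]
      _ = f * (g * (f * f) * g) * f := by rw [← h]; simp only [mul_assoc]
      _ = 1 := by rw [hf, mul_one, hg, mul_one, hf]
  intro i j
  have hi := i.2
  have hj := j.2
  rw [hM]
  split_ifs with h1 h2
  · subst h1
    simpa using act_sq hn i.1
  · apply braid (act_sq hn _) (act_sq hn _)
    unfold DnpAdj at h2
    by_cases h : (i.1 + 1 = j.1 ∧ j.1 < n) ∨ (j.1 = n ∧ i.1 + 2 = n)
    · exact act_braid hn h
    · exact (act_braid hn (by omega)).symm
  · apply comm (act_sq hn _) (act_sq hn _)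
    unfold DnpAdj at h2
    have h1' : i.1 ≠ j.1 := fun h => h1 (Fin.ext h)
    by_cases h : (i.1 + 2 ≤ j.1 ∧ j.1 < n) ∨ (j.1 = n ∧ i.1 + 2 < n) ∨ (j.1 = n ∧ i.1 + 1 = n)
    · exact act_comm hn h
    · exact (act_comm hn (by omega)).symm

/-- The homomorphism from the Coxeter group to signed permutations of coordinates. -/
noncomputable def vectorRep (hn : 2 ≤ n)
    (hM : ∀ i j, M.M i j = if i = j then 1 else if DnpAdj n i j then 3 else 2) :
    W →* Function.End (ℕ → ℤ) := cs.lift ⟨_, act_liftable hn hM⟩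

theorem vectorRep_simple (hn : 2 ≤ n)
    (hM : ∀ i j, M.M i j = if i = j then 1 else if DnpAdj n i j then 3 else 2)
    (i : Fin (n + 1)) : vectorRep cs hn hM (cs.simple i) = act n i.1 :=
  cs.lift_apply_simple _ _

/-- The number of negative roots bounds the length from below. -/
theorem card_negRoots_le_length (hn : 2 ≤ n)
    (hM : ∀ i j, M.M i j = if i = j then 1 else if DnpAdj n i j then 3 else 2) (w : W) :
    (negRoots n (vectorRep cs hn hM w (rho n))).card ≤ cs.length w := by
  obtain ⟨ω, hω, rfl⟩ := cs.exists_isReduced w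
  rw [hω.eq]
  clear hω
  induction ω with
  | nil =>
    rw [cs.wordProd_nil, map_one]
    change (negRoots n (rho n)).card ≤ 0
    simp [negRoots_rho]
  | cons i ω ih =>
    rw [cs.wordProd_cons, map_mul, vectorRep_simple, List.length_cons]
    exact (card_negRoots_act_le hn (by omega) _).trans (by omega)

/-- The first `k` blocks act as the `k`-th power of the shift with sign
`(v 0, …, v n) ↦ (-v n, v 0, …, v (n - 1))`, up to the sign of the last coordinate of `v`. -/
theorem vectorRep_blocks (hn : 2 ≤ n)
    (hM : ∀ i j, M.M i j = if i = j then 1 else if DnpAdj n i j then 3 else 2)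
    {vee : Fin (n + 1) → Fin (n + 1)}
    (hvee : ∀ i, (vee i).1 = if i.1 = n - 1 then n else if i.1 = n then n - 1 else i.1)
    (k : ℕ) (hk : k ≤ n + 1) (v : ℕ → ℤ) (j : ℕ) (hj : j ≤ n) :
    vectorRep cs hn hM (cs.wordProd ((List.range k).flatMap fun k =>
      ((List.finRange n).map (Fin.castLE (Nat.le_succ n))).map (vee^[k]))) v j =
    if j < k then -(signLast n ^ k) v (n + 1 + j - k) else (signLast n ^ k) v (j - k) := by
  induction k generalizing v with
  | zero =>
    simp only [List.range_zero, List.flatMap_nil, cs.wordProd_nil, map_one, pow_zero]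
    rfl
  | succ k ih =>
    have hblock : vectorRep cs hn hM (cs.wordProd
        (((List.finRange n).map (Fin.castLE (Nat.le_succ n))).map (vee^[k]))) =
        signLast n ^ k * ((List.range n).map (act n)).prod * signLast n ^ k := by
      have hv : ∀ (k : ℕ) (i : Fin (n + 1)),
          act n (vee^[k] i).1 = signLast n ^ k * act n i.1 * signLast n ^ k := by
        intro k i
        induction k generalizing i with
        | zero => simp
        | succ k ih =>
          rw [Function.iterate_succ_apply, ih, signLast_conj hn (by omega) (hvee i)]
          nth_rw 1 [pow_succ]
          rw [pow_succ']
          simp only [mul_assoc]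
      rw [← prod_map_conj (signLast_pow_mul_pow n k), ← List.map_coe_finRange_eq_range,
        CoxeterSystem.wordProd, map_list_prod]
      simp only [List.map_map]
      congr 1
      apply List.map_congr_left
      intro i _
      simp only [Function.comp_apply, vectorRep_simple, hv]
      rfl
    rw [List.range_succ, List.flatMap_append, cs.wordProd_append, map_mul, List.flatMap_singleton,
      hblock]
    change vectorRep cs hn hM _ ((signLast n ^ k * _ * signLast n ^ k) v) j = _
    rw [ih (by omega)]
    have e : (signLast n ^ k) ((signLast n ^ k * ((List.range n).map (act n)).prod *
        signLast n ^ k) v) = ((List.range n).map (act n)).prod ((signLast n ^ k) v) := by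
      change (signLast n ^ k * (signLast n ^ k * ((List.range n).map (act n)).prod *
        signLast n ^ k)) v = _
      rw [mul_assoc, ← mul_assoc, signLast_pow_mul_pow, one_mul]
      rfl
    rw [e, prod_act_range n n le_rfl, pow_succ']
    change _ = if j < k + 1 then -signLast n ((signLast n ^ k) v) (n + 1 + j - (k + 1)) else
      signLast n ((signLast n ^ k) v) (j - (k + 1))
    generalize (signLast n ^ k) v = u
    unfold signLast
    grind

end

/-! ### Descents of the full product -/

section
variable {W : Type*} [Group W] {n : ℕ} {M : CoxeterMatrix (Fin (n + 1))} (cs : CoxeterSystem M W)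

theorem vee_vee (hn : 2 ≤ n) {vee : Fin (n + 1) → Fin (n + 1)}
    (hvee : ∀ i, (vee i).1 = if i.1 = n - 1 then n else if i.1 = n then n - 1 else i.1)
    (i : Fin (n + 1)) : vee (vee i) = i := by
  apply Fin.ext
  rw [hvee, hvee]
  split_ifs <;> omega

theorem dnpAdj_vee (hn : 2 ≤ n) {vee : Fin (n + 1) → Fin (n + 1)}
    (hvee : ∀ i, (vee i).1 = if i.1 = n - 1 then n else if i.1 = n then n - 1 else i.1)
    (i j : Fin (n + 1)) : DnpAdj n (vee i) (vee j) ↔ DnpAdj n i j := by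
  unfold DnpAdj
  rw [hvee, hvee]
  have := i.2
  have := j.2
  split_ifs <;> omega

theorem entry_vee (hn : 2 ≤ n)
    (hM : ∀ i j, M.M i j = if i = j then 1 else if DnpAdj n i j then 3 else 2)
    {vee : Fin (n + 1) → Fin (n + 1)}
    (hvee : ∀ i, (vee i).1 = if i.1 = n - 1 then n else if i.1 = n then n - 1 else i.1)
    (k : ℕ) (i j : Fin (n + 1)) : M.M (vee^[k] i) (vee^[k] j) = M.M i j := by
  have hinj : ∀ i j, vee i = vee j ↔ i = j := fun i j =>
    (Function.LeftInverse.injective (vee_vee hn hvee)).eq_iff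
  induction k with
  | zero => rfl
  | succ k ih =>
    rw [Function.iterate_succ_apply', Function.iterate_succ_apply', ← ih, hM, hM]
    simp only [hinj, dnpAdj_vee hn hvee]

/-- The generator `s_i` (numbered from `0`) twisted `k` times by the diagram automorphism. -/
def twistedSimple (vee : Fin (n + 1) → Fin (n + 1)) (k i : ℕ) : W :=
  cs.simple (vee^[k] (Fin.ofNat (n + 1) i))

theorem twistedSimple_succ_of_lt (hn : 2 ≤ n)
    {vee : Fin (n + 1) → Fin (n + 1)}
    (hvee : ∀ i, (vee i).1 = if i.1 = n - 1 then n else if i.1 = n then n - 1 else i.1)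
    (k : ℕ) {i : ℕ} (hi : i < n - 1) :
    twistedSimple cs vee (k + 1) i = twistedSimple cs vee k i := by
  unfold twistedSimple
  rw [Function.iterate_succ_apply]
  congr 2
  apply Fin.ext
  rw [hvee]
  simp only [Fin.ofNat, Nat.mod_eq_of_lt (show i < n + 1 by omega)]
  split_ifs <;> omega

theorem twistedSimple_succ_pred (hn : 2 ≤ n)
    {vee : Fin (n + 1) → Fin (n + 1)}
    (hvee : ∀ i, (vee i).1 = if i.1 = n - 1 then n else if i.1 = n then n - 1 else i.1)
    (k : ℕ) :
    twistedSimple cs vee (k + 1) (n - 1) = twistedSimple cs vee k n := by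
  unfold twistedSimple
  rw [Function.iterate_succ_apply]
  congr 2
  apply Fin.ext
  rw [hvee]
  simp [Fin.ofNat, Nat.mod_eq_of_lt (show n - 1 < n + 1 by omega)]

theorem twistedSimple_succ_last (hn : 2 ≤ n)
    {vee : Fin (n + 1) → Fin (n + 1)}
    (hvee : ∀ i, (vee i).1 = if i.1 = n - 1 then n else if i.1 = n then n - 1 else i.1)
    (k : ℕ) :
    twistedSimple cs vee (k + 1) n = twistedSimple cs vee k (n - 1) := by
  unfold twistedSimple
  rw [Function.iterate_succ_apply]
  congr 2
  apply Fin.ext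
  rw [hvee]
  simp only [Fin.ofNat, Nat.mod_eq_of_lt (show n - 1 < n + 1 by omega),
    Nat.mod_eq_of_lt (show n < n + 1 by omega)]
  split_ifs <;> omega

theorem twistedSimple_braid (hn : 2 ≤ n)
    (hM : ∀ i j, M.M i j = if i = j then 1 else if DnpAdj n i j then 3 else 2)
    {vee : Fin (n + 1) → Fin (n + 1)}
    (hvee : ∀ i, (vee i).1 = if i.1 = n - 1 then n else if i.1 = n then n - 1 else i.1)
    (k i : ℕ) (hi : i + 1 < n) :
    twistedSimple cs vee k i * twistedSimple cs vee k (i + 1) * twistedSimple cs vee k i =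
      twistedSimple cs vee k (i + 1) * twistedSimple cs vee k i *
        twistedSimple cs vee k (i + 1) := by
  apply simple_braid
  rw [entry_vee hn hM hvee, hM, if_neg, if_pos]
  · left
    simp only [Fin.ofNat, Nat.mod_eq_of_lt (show i < n + 1 by omega),
      Nat.mod_eq_of_lt (show i + 1 < n + 1 by omega)]
    exact ⟨trivial, by omega⟩
  · simp only [Fin.ext_iff, Fin.ofNat, Nat.mod_eq_of_lt (show i < n + 1 by omega),
      Nat.mod_eq_of_lt (show i + 1 < n + 1 by omega)]
    omega

theorem twistedSimple_comm (hn : 2 ≤ n)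
    (hM : ∀ i j, M.M i j = if i = j then 1 else if DnpAdj n i j then 3 else 2)
    {vee : Fin (n + 1) → Fin (n + 1)}
    (hvee : ∀ i, (vee i).1 = if i.1 = n - 1 then n else if i.1 = n then n - 1 else i.1)
    (k i j : ℕ) (h : i + 2 ≤ j ∧ j < n ∨ i + 1 = n ∧ j = n) :
    twistedSimple cs vee k i * twistedSimple cs vee k j =
      twistedSimple cs vee k j * twistedSimple cs vee k i := by
  apply simple_comm
  rw [entry_vee hn hM hvee, hM, if_neg, if_neg]
  · simp only [DnpAdj, Fin.ofNat, Nat.mod_eq_of_lt (show i < n + 1 by omega),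
      Nat.mod_eq_of_lt (show j < n + 1 by omega)]
    omega
  · simp only [Fin.ext_iff, Fin.ofNat, Nat.mod_eq_of_lt (show i < n + 1 by omega),
      Nat.mod_eq_of_lt (show j < n + 1 by omega)]
    omega

theorem length_twistedSimple {vee : Fin (n + 1) → Fin (n + 1)}
    (k i : ℕ) : cs.length (twistedSimple cs vee k i) = 1 :=
  cs.length_simple _

theorem length_partialProd_le
    {f : ℕ → W} (hf : ∀ i, cs.length (f i) = 1) (m : ℕ) :
    cs.length (partialProd f m) ≤ m := by
  induction m with
  | zero => simp [partialProd]
  | succ m ih =>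
    rw [partialProd_succ]
    refine (cs.length_mul_le _ _).trans ?_
    rw [hf]
    omega

/-- The product of the first `k` blocks, block `l` being the Coxeter-type product
`s_0 ⋯ s_{n-1}` twisted `l` times. -/
def blocks (vee : Fin (n + 1) → Fin (n + 1)) (k : ℕ) : W :=
  partialProd (fun l => partialProd (twistedSimple cs vee l) n) k

theorem length_blocks_le {vee : Fin (n + 1) → Fin (n + 1)}
    (k : ℕ) : cs.length (blocks cs vee k) ≤ k * n := by
  induction k with
  | zero => simp [blocks, partialProd]
  | succ k ih =>
    rw [blocks, partialProd_succ, ← blocks]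
    refine (cs.length_mul_le _ _).trans ?_
    have := length_partialProd_le cs (length_twistedSimple cs (vee := vee) k) n
    rw [Nat.succ_mul]
    omega

/-- Multiplying the first `k + 1` blocks by the last letter of the last block cancels it. -/
theorem blocks_mul_pred (hn : 2 ≤ n)
    (hM : ∀ i j, M.M i j = if i = j then 1 else if DnpAdj n i j then 3 else 2)
    {vee : Fin (n + 1) → Fin (n + 1)}
    (hvee : ∀ i, (vee i).1 = if i.1 = n - 1 then n else if i.1 = n then n - 1 else i.1)
    (k : ℕ) :
    cs.length (blocks cs vee (k + 1) * twistedSimple cs vee k (n - 1)) < (k + 1) * n := by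
  obtain ⟨m, rfl⟩ : ∃ m, n = m + 1 := ⟨n - 1, by omega⟩
  rw [blocks, partialProd_succ, ← blocks, partialProd_succ, Nat.add_sub_cancel, mul_assoc,
    mul_assoc]
  have hs : twistedSimple cs vee k m * twistedSimple cs vee k m = 1 :=
    cs.simple_mul_simple_self _
  rw [hs, mul_one]
  refine (cs.length_mul_le _ _).trans_lt ?_
  have h1 := length_partialProd_le cs (length_twistedSimple cs (vee := vee) k) m
  have h2 := length_blocks_le cs (vee := vee) k
  rw [Nat.succ_mul]
  omega

/-- Moving the twisted letter `n` through the last block turns it into the highest reflection of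
the type `A` parabolic of the previous block, which then cancels a first letter there. -/
theorem blocks_mul_last (hn : 2 ≤ n)
    (hM : ∀ i j, M.M i j = if i = j then 1 else if DnpAdj n i j then 3 else 2)
    {vee : Fin (n + 1) → Fin (n + 1)}
    (hvee : ∀ i, (vee i).1 = if i.1 = n - 1 then n else if i.1 = n then n - 1 else i.1)
    (k : ℕ) :
    cs.length (blocks cs vee (k + 2) * twistedSimple cs vee (k + 1) n) < (k + 2) * n := by
  obtain ⟨m, rfl⟩ : ∃ m, n = m + 1 := ⟨n - 1, by omega⟩
  have h1 : partialProd (twistedSimple cs vee (k + 1)) m = partialProd (twistedSimple cs vee k) m :=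
    partialProd_congr fun i hi => twistedSimple_succ_of_lt cs hn hvee k (by omega)
  have h2 := twistedSimple_succ_last cs hn hvee k
  have h3 := twistedSimple_comm cs hn hM hvee (k + 1) m (m + 1) (by omega)
  have h4 := partialProd_highest (f := twistedSimple cs vee k) (n := m)
    (fun i hi => twistedSimple_braid cs hn hM hvee k i hi)
    (fun i j h h' => twistedSimple_comm cs hn hM hvee k i j (.inl ⟨h, h'⟩))
    (cs.simple_mul_simple_self _)
  rw [Nat.add_sub_cancel] at h2
  have e : blocks cs vee (k + 2) * twistedSimple cs vee (k + 1) (m + 1) =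
      blocks cs vee k * partialProd (fun i => twistedSimple cs vee k (i + 1)) m *
        partialProd (twistedSimple cs vee (k + 1)) (m + 1) := by
    rw [blocks, partialProd_succ, partialProd_succ, ← blocks, ← h4,
      partialProd_succ (twistedSimple cs vee (k + 1)), mul_assoc _ _ (twistedSimple cs vee _ _),
      mul_assoc _ _ (twistedSimple cs vee _ _), h3, h2, h1]
    group
  rw [e]
  refine (cs.length_mul_le _ _).trans_lt ?_
  have l1 := cs.length_mul_le (blocks cs vee k)
    (partialProd (fun i => twistedSimple cs vee k (i + 1)) m)
  have l2 := length_partialProd_le cs (fun i => length_twistedSimple cs (vee := vee) k (i + 1)) m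
  have l3 := length_blocks_le cs (vee := vee) k
  have l4 := length_partialProd_le cs (length_twistedSimple cs (vee := vee) (k + 1)) (m + 1)
  rw [Nat.add_mul]
  omega

/-- A letter `i < n - 1` moves leftwards through the blocks, its index growing by one each time,
until one of the two preceding cancellations applies. -/
theorem blocks_mul_lt (hn : 2 ≤ n)
    (hM : ∀ i j, M.M i j = if i = j then 1 else if DnpAdj n i j then 3 else 2)
    {vee : Fin (n + 1) → Fin (n + 1)}
    (hvee : ∀ i, (vee i).1 = if i.1 = n - 1 then n else if i.1 = n then n - 1 else i.1)
    (k i : ℕ) (hi : i + 1 < n) (hk : n ≤ k + i) :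
    cs.length (blocks cs vee (k + 1) * twistedSimple cs vee k i) < (k + 1) * n := by
  induction k generalizing i with
  | zero => omega
  | succ k ih =>
    have hprev : cs.length (blocks cs vee (k + 1) * twistedSimple cs vee (k + 1) (i + 1)) <
        (k + 1) * n := by
      by_cases h : i + 1 = n - 1
      · rw [h, twistedSimple_succ_pred cs hn hvee]
        obtain ⟨l, rfl⟩ : ∃ l, k = l + 1 := ⟨k - 1, by omega⟩
        exact blocks_mul_last cs hn hM hvee l
      · rw [twistedSimple_succ_of_lt cs hn hvee k (by omega)]
        exact ih (i + 1) (by omega) (by omega)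
    have e := partialProd_shift (f := twistedSimple cs vee (k + 1)) (n := n)
      (fun i hi => twistedSimple_braid cs hn hM hvee _ i hi)
      (fun i j h h' => twistedSimple_comm cs hn hM hvee _ i j (.inl ⟨h, h'⟩))
      (i := i) hi le_rfl
    rw [blocks, partialProd_succ, ← blocks, mul_assoc, e, ← mul_assoc]
    refine (cs.length_mul_le _ _).trans_lt ?_
    have := length_partialProd_le cs (length_twistedSimple cs (vee := vee) (k + 1)) n
    rw [Nat.succ_mul]
    omega

/-- Every simple reflection shortens the full product below `n * (n + 1)`. -/
theorem length_blocks_mul_simple_lt (hn : 2 ≤ n)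
    (hM : ∀ i j, M.M i j = if i = j then 1 else if DnpAdj n i j then 3 else 2)
    {vee : Fin (n + 1) → Fin (n + 1)}
    (hvee : ∀ i, (vee i).1 = if i.1 = n - 1 then n else if i.1 = n then n - 1 else i.1)
    (b : Fin (n + 1)) :
    cs.length (blocks cs vee (n + 1) * cs.simple b) < (n + 1) * n := by
  have hsurj : Function.Surjective vee^[n] :=
    Function.Surjective.iterate (Function.RightInverse.surjective (vee_vee hn hvee)) n
  obtain ⟨i, rfl⟩ := hsurj b
  have hi := i.2
  have e : cs.simple (vee^[n] i) = twistedSimple cs vee n i.1 := by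
    unfold twistedSimple
    congr 2
    apply Fin.ext
    simp [Fin.ofNat, Nat.mod_eq_of_lt hi]
  rw [e]
  rcases (by omega : i.1 + 1 < n ∨ i.1 = n - 1 ∨ i.1 = n) with h | h | h
  · exact blocks_mul_lt cs hn hM hvee n i.1 h (by omega)
  · rw [h]
    exact blocks_mul_pred cs hn hM hvee n
  · rw [h]
    obtain ⟨m, hm⟩ : ∃ m, n = m + 1 := ⟨n - 1, by omega⟩
    have := blocks_mul_last cs hn hM hvee m
    rwa [show m + 2 = n + 1 by omega, ← hm] at this

theorem wordProd_eq_blocks (vee : Fin (n + 1) → Fin (n + 1)) (k : ℕ) :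
    cs.wordProd ((List.range k).flatMap fun k =>
      ((List.finRange n).map (Fin.castLE (Nat.le_succ n))).map (vee^[k])) = blocks cs vee k := by
  induction k with
  | zero => simp [blocks, partialProd]
  | succ k ih =>
    rw [List.range_succ, List.flatMap_append, cs.wordProd_append, ih, List.flatMap_singleton]
    conv_rhs => rw [blocks, partialProd_succ]
    rw [← blocks]
    congr 1
    rw [partialProd, ← List.map_coe_finRange_eq_range, CoxeterSystem.wordProd]
    simp only [List.map_map]
    congr 1
    apply List.map_congr_left
    intro i _
    simp only [Function.comp_apply, twistedSimple]
    congr 2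
    apply Fin.ext
    simp only [Fin.ofNat, Fin.val_castLE]
    exact (Nat.mod_eq_of_lt (by omega)).symm

end

/-! ### The longest element -/

/-- In type `D_{n+1}` with the diagram automorphism `∨` swapping the two fork
nodes `n` and `n+1` and fixing the others, the word
`w̃₀ = ∏_{k=0}^{n} (s₁ s₂ ⋯ s_n)^{k∨}` is a reduced expression of the longest element
`w₀`, of length `n(n+1)`. -/
theorem stmt8 {W : Type*} [Group W] (n : ℕ) (hn : 2 ≤ n)
    (M : CoxeterMatrix (Fin (n + 1)))
    (hM : ∀ i j, M.M i j = if i = j then 1 else if DnpAdj n i j then 3 else 2)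
    (cs : CoxeterSystem M W)
    (vee : Fin (n + 1) → Fin (n + 1))
    (hvee : ∀ i, (vee i).1 = if i.1 = n - 1 then n else if i.1 = n then n - 1 else i.1)
    (js : List (Fin (n + 1)))
    (hjs : js = (List.finRange n).map (Fin.castLE (Nat.le_succ n)))
    (word : List (Fin (n + 1)))
    (hword : word = (List.range (n + 1)).flatMap fun k => js.map (vee^[k])) :
    word.length = n * (n + 1) ∧
      cs.IsReduced word ∧
      (∀ w : W, cs.length w ≤ cs.length (cs.wordProd word)) := by
  have hlen : word.length = n * (n + 1) := by
    subst hword hjs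
    simp [List.length_flatMap, mul_comm]
  have hle : n * (n + 1) ≤ cs.length (cs.wordProd word) := by
    refine le_trans (le_of_eq ?_) (card_negRoots_le_length cs hn hM _)
    symm
    apply card_negRoots_neg
    intro j hj
    have hsign : ∀ k, ∀ j ≤ n, (signLast n ^ k) (rho n) j = n - j := by
      intro k
      induction k with
      | zero => intro j _; rfl
      | succ k ih =>
        intro j hj
        rw [pow_succ']
        change signLast n ((signLast n ^ k) (rho n)) j = _
        have hv := ih j hj
        generalize (signLast n ^ k) (rho n) = v at hv ⊢
        unfold signLast
        split_ifs with h
        · rw [hv]; omega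
        · exact hv
    subst hword hjs
    rw [vectorRep_blocks cs hn hM hvee (n + 1) le_rfl _ j hj, if_pos (by omega),
      hsign _ _ (by omega)]
    push_cast [show n + 1 + j - (n + 1) = j by omega]
    ring
  have hred : cs.IsReduced word :=
    le_antisymm (cs.length_wordProd_le word) (hlen ▸ hle)
  refine ⟨hlen, hred, length_le_of_forall_descent cs ?_ _ ?_⟩
  · intro i j
    rw [hM]
    split_ifs <;> simp
  · intro i
    rw [hred.eq, hlen, hword, hjs, wordProd_eq_blocks, mul_comm n]
    exact length_blocks_mul_simple_lt cs hn hM hvee i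
end
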